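/- arXiv:2303.09017 — 8 statements merged into one kernel-verified Lean document; each statement's English description precedes it below -/
import Mathlib

section
/- Let Y be a finite nonempty set and (J y)_{y∈Y} finite nonempty sets, and let V, U ⊆ E be linear subspaces. If CCPD(V) ⊆ CCPD(U), then QNCCPD(V) ⊆ QNCCPD(U). -/
/-- The set of conditional probability distributions on the disjoint union `Σ y, J y`. -/
def condDist (Y : Type) [Fintype Y] (J : Y → Type) [∀ y, Fintype (J y)] :
    Set ((Σ y : Y, J y) → ℝ) :=
  {x | (∀ p : Σ y : Y, J y, 0 ≤ x p) ∧ ∀ y : Y, ∑ j : J y, x ⟨y, j⟩ = 1}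

/-- The set of quasi-normalised vectors: components in `[0,1]` and all row sums equal. -/
def quasiNorm (Y : Type) [Fintype Y] (J : Y → Type) [∀ y, Fintype (J y)] :
    Set ((Σ y : Y, J y) → ℝ) :=
  {x | (∀ p : Σ y : Y, J y, 0 ≤ x p ∧ x p ≤ 1) ∧
    ∀ y y' : Y, ∑ j : J y, x ⟨y, j⟩ = ∑ j : J y', x ⟨y', j⟩}

/-- If `CCPD(V) ⊆ CCPD(U)` then `QNCCPD(V) ⊆ QNCCPD(U)`. -/
theorem qnccpd_subset_of_ccpd_subset
    (Y : Type) [Fintype Y] [Nonempty Y]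
    (J : Y → Type) [∀ y, Fintype (J y)] [∀ y, Nonempty (J y)]
    (V U : Submodule ℝ ((Σ y : Y, J y) → ℝ))
    (h : (V : Set ((Σ y : Y, J y) → ℝ)) ∩ condDist Y J
        ⊆ (U : Set ((Σ y : Y, J y) → ℝ)) ∩ condDist Y J) :
    (V : Set ((Σ y : Y, J y) → ℝ)) ∩ quasiNorm Y J
      ⊆ (U : Set ((Σ y : Y, J y) → ℝ)) ∩ quasiNorm Y J := by
  rintro x ⟨hV, hx⟩
  refine ⟨?_, hx⟩
  obtain ⟨h01, hs⟩ := hx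
  obtain ⟨y0⟩ := ‹Nonempty Y›
  by_cases h0 : ∑ j : J y0, x ⟨y0, j⟩ = 0
  · have hz : x = 0 := by
      funext p
      obtain ⟨y, j⟩ := p
      have h1 : ∑ j : J y, x ⟨y, j⟩ = 0 := (hs y y0).trans h0
      exact (Finset.sum_eq_zero_iff_of_nonneg (fun i _ => (h01 ⟨y, i⟩).1)).1 h1 j
        (Finset.mem_univ j)
    rw [hz]
    exact U.zero_mem
  · have hn : 0 ≤ ∑ j : J y0, x ⟨y0, j⟩ := Finset.sum_nonneg (fun i _ => (h01 ⟨y0, i⟩).1)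
    have hm := (h (a := (∑ j : J y0, x ⟨y0, j⟩)⁻¹ • x) ⟨V.smul_mem _ hV,
      fun p => mul_nonneg (inv_nonneg.2 hn) (h01 p).1, fun y => by
        simp only [Pi.smul_apply, smul_eq_mul]
        rw [← Finset.mul_sum, hs y y0, inv_mul_cancel₀ h0]⟩).1
    exact (U.smul_mem_iff (inv_ne_zero h0)).1 hm
end

section
/- Let Y be a finite nonempty set and (J y)_{y∈Y} finite nonempty sets, and let V, U ⊆ E be linear subspaces with CCPD(V) ⊆ CCPD(U). If u ∈ CCPD(U) and v ∈ QNCCPD(V) satisfies v ≤ u componentwise, then u − v ∈ QNCCPD(U); moreover, if the mass m of v satisfies m < 1, then (1 − m)⁻¹ • (u − v) ∈ CCPD(U). -/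
/-- If `CCPD(V) ⊆ CCPD(U)`, `u ∈ CCPD(U)` and `v ∈ QNCCPD(V)` with `v ≤ u`
componentwise, then `u - v ∈ QNCCPD(U)`; moreover, if the mass `m` of `v` satisfies
`m < 1`, then `(1 - m)⁻¹ • (u - v) ∈ CCPD(U)`. -/
theorem difference_in_super_polytope
    (Y : Type) [Fintype Y] [Nonempty Y]
    (J : Y → Type) [∀ y, Fintype (J y)] [∀ y, Nonempty (J y)]
    (V U : Submodule ℝ ((Σ y : Y, J y) → ℝ))
    (hVU : (V : Set ((Σ y : Y, J y) → ℝ)) ∩ condDist Y J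
        ⊆ (U : Set ((Σ y : Y, J y) → ℝ)) ∩ condDist Y J)
    (u v : (Σ y : Y, J y) → ℝ)
    (hu : u ∈ (U : Set ((Σ y : Y, J y) → ℝ)) ∩ condDist Y J)
    (hv : v ∈ (V : Set ((Σ y : Y, J y) → ℝ)) ∩ quasiNorm Y J)
    (hle : v ≤ u)
    (m : ℝ) (hm : ∀ y : Y, ∑ j : J y, v ⟨y, j⟩ = m) :
    u - v ∈ (U : Set ((Σ y : Y, J y) → ℝ)) ∩ quasiNorm Y J ∧
    (m < 1 → (1 - m)⁻¹ • (u - v) ∈ (U : Set ((Σ y : Y, J y) → ℝ)) ∩ condDist Y J) := by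
  obtain ⟨huU, hu0, hu1⟩ := hu
  obtain ⟨hvV, hv0, hv1⟩ := hv
  have hm0 : 0 ≤ m := by
    obtain ⟨y⟩ := ‹Nonempty Y›
    rw [← hm y]
    exact Finset.sum_nonneg fun j _ => (hv0 _).1
  have hvU : v ∈ U := by
    rcases hm0.eq_or_lt with h | h
    · have : v = 0 := by
        funext p
        obtain ⟨y, j⟩ := p
        have h1 := hm y
        rw [← h, Finset.sum_eq_zero_iff_of_nonneg (fun j _ => (hv0 _).1)] at h1
        exact h1 j (Finset.mem_univ _)
      rw [this]
      exact U.zero_mem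
    · have h1 : m⁻¹ • v ∈ (V : Set ((Σ y : Y, J y) → ℝ)) ∩ condDist Y J := by
        refine ⟨V.smul_mem _ hvV, fun p => ?_, fun y => ?_⟩
        · exact mul_nonneg (inv_nonneg.2 hm0) (hv0 p).1
        · simp only [Pi.smul_apply, smul_eq_mul]
          rw [← Finset.mul_sum, hm y, inv_mul_cancel₀ h.ne']
      have h2 := U.smul_mem m (hVU h1).1
      rwa [smul_smul, mul_inv_cancel₀ h.ne', one_smul] at h2
  have hsum : ∀ y : Y, ∑ j : J y, (u - v) ⟨y, j⟩ = 1 - m := by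
    intro y
    simp only [Pi.sub_apply]
    rw [Finset.sum_sub_distrib, hu1, hm]
  have hule : ∀ p, u p ≤ 1 := by
    rintro ⟨y, j⟩
    rw [← hu1 y]
    exact Finset.single_le_sum (f := fun j => u ⟨y, j⟩) (fun j _ => hu0 _) (Finset.mem_univ j)
  have hd : ∀ p, 0 ≤ (u - v) p := fun p => sub_nonneg.2 (hle p)
  refine ⟨⟨U.sub_mem huU hvU, fun p => ⟨hd p, ?_⟩, fun y y' => by rw [hsum, hsum]⟩, fun hlt => ?_⟩
  · have := hule p
    have := (hv0 p).1
    simp only [Pi.sub_apply]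
    linarith
  · refine ⟨U.smul_mem _ (U.sub_mem huU hvU), fun p => ?_, fun y => ?_⟩
    · exact mul_nonneg (inv_nonneg.2 (by linarith)) (hd p)
    · have := hsum y
      simp only [Pi.smul_apply, smul_eq_mul]
      rw [← Finset.mul_sum, this, inv_mul_cancel₀ (by linarith)]
end

section
/- Let Y be a finite nonempty set and (J y)_{y∈Y} finite nonempty sets, let U ⊆ E be a linear subspace, and let (V z)_{z ∈ Z} be a finite family of linear subspaces of E with CCPD(V z) ⊆ CCPD(U) for every z ∈ Z. If u ∈ CCPD(U) and (v z)_{z∈Z} is a family with v z ∈ QNCCPD(V z) for each z and ∑_{z∈Z} v z ≤ u componentwise, then u − ∑_{z∈Z} v z ∈ QNCCPD(U). -/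
/-- If `(V z)_{z ∈ Z}` is a finite family of subspaces with
`CCPD(V z) ⊆ CCPD(U)`, `u ∈ CCPD(U)` and `(v z)` is a family with `v z ∈ QNCCPD(V z)`
and `∑ z, v z ≤ u` componentwise, then `u - ∑ z, v z ∈ QNCCPD(U)`. -/
theorem difference_in_super_polytope_decomposition
    (Y : Type) [Fintype Y] [Nonempty Y]
    (J : Y → Type) [∀ y, Fintype (J y)] [∀ y, Nonempty (J y)]
    (Z : Type) [Fintype Z]
    (U : Submodule ℝ ((Σ y : Y, J y) → ℝ))
    (V : Z → Submodule ℝ ((Σ y : Y, J y) → ℝ))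
    (hVU : ∀ z : Z, (V z : Set ((Σ y : Y, J y) → ℝ)) ∩ condDist Y J
        ⊆ (U : Set ((Σ y : Y, J y) → ℝ)) ∩ condDist Y J)
    (u : (Σ y : Y, J y) → ℝ)
    (hu : u ∈ (U : Set ((Σ y : Y, J y) → ℝ)) ∩ condDist Y J)
    (v : Z → (Σ y : Y, J y) → ℝ)
    (hv : ∀ z : Z, v z ∈ (V z : Set ((Σ y : Y, J y) → ℝ)) ∩ quasiNorm Y J)
    (hle : ∑ z : Z, v z ≤ u) :
    u - ∑ z : Z, v z ∈ (U : Set ((Σ y : Y, J y) → ℝ)) ∩ quasiNorm Y J := by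
  obtain ⟨huU, hu0, hu1⟩ := hu
  have hvU : ∀ z, v z ∈ U := by
    intro z
    obtain ⟨hzV, hz0, hz1⟩ := hv z
    obtain ⟨y0⟩ := (inferInstance : Nonempty Y)
    by_cases hc : ∑ j : J y0, v z ⟨y0, j⟩ = 0
    · have h0 : v z = 0 := by
        funext p
        obtain ⟨y, j⟩ := p
        have h1 := (hz1 y y0).trans hc
        exact (Finset.sum_eq_zero_iff_of_nonneg (fun j _ => (hz0 ⟨y, j⟩).1)).1 h1 j
          (Finset.mem_univ j)
      rw [h0]
      exact U.zero_mem
    · have hpos : 0 ≤ ∑ j : J y0, v z ⟨y0, j⟩ := Finset.sum_nonneg (fun j _ => (hz0 ⟨y0, j⟩).1)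
      generalize hcc : ∑ j : J y0, v z ⟨y0, j⟩ = c at hc hpos
      have hmem : c⁻¹ • v z ∈ U := by
        refine (hVU z ⟨(V z).smul_mem _ hzV, ?_, ?_⟩).1
        · intro p
          exact mul_nonneg (inv_nonneg.2 hpos) (hz0 p).1
        · intro y
          simp only [Pi.smul_apply, smul_eq_mul]
          rw [← Finset.mul_sum, hz1 y y0, hcc, inv_mul_cancel₀ hc]
      have := U.smul_mem c hmem
      rwa [smul_inv_smul₀ hc] at this
  refine ⟨U.sub_mem huU (U.sum_mem fun z _ => hvU z), ?_, ?_⟩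
  · intro p
    have h1 := hle p
    have h2 : 0 ≤ (∑ z : Z, v z) p := by
      rw [Finset.sum_apply]
      exact Finset.sum_nonneg fun z _ => ((hv z).2.1 p).1
    have h3 : u p ≤ 1 := by
      obtain ⟨y, j⟩ := p
      rw [← hu1 y]
      exact Finset.single_le_sum (f := fun j => u ⟨y, j⟩) (fun j _ => hu0 ⟨y, j⟩)
        (Finset.mem_univ j)
    rw [Pi.sub_apply]
    constructor <;> linarith
  · intro y y'
    simp only [Pi.sub_apply, Finset.sum_apply, Finset.sum_sub_distrib, hu1]
    rw [Finset.sum_comm, Finset.sum_comm (s := (Finset.univ : Finset (J y')))]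
    congr 1
    exact Finset.sum_congr rfl fun z _ => (hv z).2.2 y y'
end

section
/- The no-signalling polytope on three parties with binary inputs and binary outputs — the set of all three-party empirical models p : ({0,1}³) → ({0,1}³ → ℝ) satisfying the no-signalling equations — has affine dimension 26; that is, the rank over ℝ of the vector span of the differences of its elements equals 26. -/
/-- The no-signalling polytope on three parties `A, B, C` with binary inputs and binary
outputs: empirical models `p` (nonnegative, normalised) such that for each party the
corresponding output-marginal is unchanged when that party's input is varied. -/
def noSignalling3 : Set ((Bool × Bool × Bool) → (Bool × Bool × Bool) → ℝ) :=
  {p | (∀ i o, 0 ≤ p i o) ∧ (∀ i, ∑ o : Bool × Bool × Bool, p i o = 1) ∧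
    (∀ a a' b c y z : Bool,
      ∑ x : Bool, p (a, b, c) (x, y, z) = ∑ x : Bool, p (a', b, c) (x, y, z)) ∧
    (∀ a b b' c x z : Bool,
      ∑ y : Bool, p (a, b, c) (x, y, z) = ∑ y : Bool, p (a, b', c) (x, y, z)) ∧
    (∀ a b c c' x y : Bool,
      ∑ z : Bool, p (a, b, c) (x, y, z) = ∑ z : Bool, p (a, b, c') (x, y, z))}


namespace NS3

/-- Models. -/
abbrev M := (Bool × Bool × Bool) → (Bool × Bool × Bool) → ℝ

/-- Direction space. -/
def W : Submodule ℝ M where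
  carrier := {p | (∀ i, ∑ o : Bool × Bool × Bool, p i o = 0) ∧
    (∀ a a' b c y z : Bool,
      ∑ x : Bool, p (a, b, c) (x, y, z) = ∑ x : Bool, p (a', b, c) (x, y, z)) ∧
    (∀ a b b' c x z : Bool,
      ∑ y : Bool, p (a, b, c) (x, y, z) = ∑ y : Bool, p (a, b', c) (x, y, z)) ∧
    (∀ a b c c' x y : Bool,
      ∑ z : Bool, p (a, b, c) (x, y, z) = ∑ z : Bool, p (a, b, c') (x, y, z))}
  zero_mem' := by simp
  add_mem' := by
    rintro p q ⟨h0, h1, h2, h3⟩ ⟨k0, k1, k2, k3⟩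
    refine ⟨fun i => ?_, fun a a' b c y z => ?_, fun a b b' c x z => ?_,
      fun a b c c' x y => ?_⟩ <;> simp only [Pi.add_apply, Finset.sum_add_distrib]
    · rw [h0, k0, add_zero]
    · rw [h1 a a', k1 a a']
    · rw [h2 a b b', k2 a b b']
    · rw [h3 a b c c', k3 a b c c']
  smul_mem' := by
    rintro r p ⟨h0, h1, h2, h3⟩
    refine ⟨fun i => ?_, fun a a' b c y z => ?_, fun a b b' c x z => ?_,
      fun a b c c' x y => ?_⟩ <;> simp only [Pi.smul_apply, smul_eq_mul, ← Finset.mul_sum]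
    · rw [h0, mul_zero]
    · rw [h1 a a']
    · rw [h2 a b b']
    · rw [h3 a b c c']

/-- Uniform model. -/
noncomputable def u : M := fun _ _ => 1 / 8

lemma mem_of_small {d : M} (hd : d ∈ W) (hs : ∀ i o, -(1 / 8) ≤ d i o) :
    d + u ∈ noSignalling3 := by
  obtain ⟨h0, h1, h2, h3⟩ := hd
  refine ⟨fun i o => ?_, fun i => ?_, fun a a' b c y z => ?_, fun a b b' c x z => ?_,
      fun a b c c' x y => ?_⟩ <;> simp only [Pi.add_apply, Finset.sum_add_distrib, u]
  · linarith [hs i o]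
  · rw [h0]; simp
  · rw [h1 a a']
  · rw [h2 a b b']
  · rw [h3 a b c c']

lemma span_eq : vectorSpan ℝ noSignalling3 = W := by
  apply le_antisymm
  · rw [vectorSpan_def, Submodule.span_le]
    rintro _ ⟨p, ⟨-, h0, h1, h2, h3⟩, q, ⟨-, k0, k1, k2, k3⟩, rfl⟩
    refine ⟨fun i => ?_, fun a a' b c y z => ?_, fun a b b' c x z => ?_,
      fun a b c c' x y => ?_⟩ <;>
      simp only [vsub_eq_sub, Pi.sub_apply, Finset.sum_sub_distrib]
    · rw [h0, k0, sub_self]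
    · rw [h1 a a', k1 a a']
    · rw [h2 a b b', k2 a b b']
    · rw [h3 a b c c', k3 a b c c']
  · intro d hd
    have hu : u ∈ noSignalling3 := by
      have := mem_of_small W.zero_mem (by intro i o; simp)
      simpa using this
    set K : ℝ := 1 + ∑ i, ∑ o, |d i o| with hK
    have hS : 0 ≤ ∑ i, ∑ o, |d i o| :=
      Finset.sum_nonneg fun i _ => Finset.sum_nonneg fun o _ => abs_nonneg _
    have hKpos : 0 < K := by linarith
    have hb : ∀ i o, |d i o| ≤ K := by
      intro i o
      have e1 : |d i o| ≤ ∑ o, |d i o| :=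
        Finset.single_le_sum (f := fun o => |d i o|) (fun o _ => abs_nonneg _)
          (Finset.mem_univ o)
      have e2 : ∑ o, |d i o| ≤ ∑ i, ∑ o, |d i o| :=
        Finset.single_le_sum (f := fun i => ∑ o, |d i o|)
          (fun i _ => Finset.sum_nonneg fun o _ => abs_nonneg _) (Finset.mem_univ i)
      linarith
    have hm : (8 * K)⁻¹ • d + u ∈ noSignalling3 := by
      apply mem_of_small (W.smul_mem _ hd)
      intro i o
      have h := neg_le_of_abs_le (hb i o)
      simp only [Pi.smul_apply, smul_eq_mul]
      rw [inv_mul_eq_div, le_div_iff₀ (by positivity)]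
      linarith
    have h2 := vsub_mem_vectorSpan ℝ hm hu
    have h3 := (vectorSpan ℝ noSignalling3).smul_mem (8 * K) h2
    rw [vsub_eq_sub, add_sub_cancel_right, smul_smul, mul_inv_cancel₀ (by positivity),
      one_smul] at h3
    exact h3

/-- One-party coordinates. -/
def C : Option Bool → (Bool → Bool → ℝ) → ℝ
  | some j, w => w j false
  | none, w => w false false + w false true

/-- One-party reconstruction. -/
def D : Bool → Bool → (Option Bool → ℝ) → ℝ
  | j, false, v => v (some j)
  | j, true, v => v none - v (some j)

/-- Index type of coordinates. -/
abbrev T := {s : Option Bool × Option Bool × Option Bool // s ≠ (none, none, none)}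

lemma CD (s : Option Bool) (v : Option Bool → ℝ) : C s (fun j o => D j o v) = v s := by
  cases s <;> simp [C, D]

/-- Coordinates. -/
def E (d : M) (s : Option Bool × Option Bool × Option Bool) : ℝ :=
  C s.1 fun a x => C s.2.1 fun b y => C s.2.2 fun c z => d (a, b, c) (x, y, z)

/-- Reconstruction. -/
def F (q : Option Bool × Option Bool × Option Bool → ℝ) : M := fun i o =>
  D i.1 o.1 fun s => D i.2.1 o.2.1 fun t => D i.2.2 o.2.2 fun w => q (s, t, w)

lemma C_D_comm (s : Option Bool) (j o : Bool) (f : Bool → Bool → Option Bool → ℝ) :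
    C s (fun a x => D j o (f a x)) = D j o (fun t => C s fun a x => f a x t) := by
  cases s <;> cases o <;> simp [C, D] <;> ring

lemma EF (q) : E (F q) = q := by
  funext ⟨s, t, w⟩
  simp only [E, F]
  simp only [C_D_comm, CD]

lemma F_mem {q} (h : q (none, none, none) = 0) : F q ∈ W := by
  refine ⟨fun ⟨a, b, c⟩ => ?_, fun a a' b c y z => ?_, fun a b b' c x z => ?_,
      fun a b c c' x y => ?_⟩
  · simp only [Fintype.sum_prod_type, Fintype.sum_bool, F, D, h]; ring
  · simp only [Fintype.sum_bool, F, D]; ring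
  · cases x <;> simp only [Fintype.sum_bool, F, D] <;> ring
  · cases x <;> cases y <;> simp only [Fintype.sum_bool, F, D] <;> ring

lemma E_none {d : M} (hd : d ∈ W) : E d (none, none, none) = 0 := by
  have := hd.1 (false, false, false)
  simp only [Fintype.sum_prod_type, Fintype.sum_bool] at this
  simp only [E, C]
  linarith

lemma FE {d : M} (hd : d ∈ W) : F (E d) = d := by
  obtain ⟨-, h1, h2, h3⟩ := hd
  simp only [Fintype.sum_bool] at h1 h2 h3
  funext ⟨a, b, c⟩ ⟨x, y, z⟩
  have A := fun b c y z => h1 a false b c y z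
  have B := fun a c x z => h2 a b false c x z
  have G := fun a b x y => h3 a b c false x y
  cases x <;> cases y <;> cases z <;> simp only [F, E, D, C]
  · linarith [G a b false false]
  · linarith [B a c false false]
  · linarith [B a c false false, B a c false true, G a b false false, G a b false true,
      G a false false false, G a false false true]
  · linarith [A b c false false]
  · linarith [A b c false false, A b c false true, G a b false false, G a b true false,
      G false b false false, G false b true false]
  · linarith [A b c false false, A b c true false, B a c false false, B a c true false,
      B false c false false, B false c true false]
  · linarith [A b c false false, A b c true false, A b c false true, A b c true true,
      B false c false false, B false c true false, B false c false true, B false c true true,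
      G false false false false, G false false true false, G false false false true,
      G false false true true, B a c false false, B a c true false, B a c false true,
      G a b false false, G a b true false, G a b false true, G a b true true, G false b false false,
      G false b true false, G false b false true, G false b true true,
      G a false false false, G a false true false, G a false false true, G a false true true]

/-- Coordinates as a linear map. -/
def L : W →ₗ[ℝ] (T → ℝ) where
  toFun d s := E d.1 s.1
  map_add' := by
    rintro d e
    funext ⟨⟨s, t, w⟩, _⟩
    cases s <;> cases t <;> cases w <;> simp [E, C] <;> ring
  map_smul' := by
    rintro r d
    funext ⟨⟨s, t, w⟩, _⟩
    cases s <;> cases t <;> cases w <;> simp [E, C] <;> ring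

lemma L_bij : Function.Bijective L := by
  constructor
  · intro d e h
    apply Subtype.ext
    rw [← FE d.2, ← FE e.2]
    congr 1
    funext s
    by_cases hs : s = (none, none, none)
    · rw [hs, E_none d.2, E_none e.2]
    · exact congrFun h ⟨s, hs⟩
  · intro q
    refine ⟨⟨F (fun s => if h : s ≠ (none, none, none) then q ⟨s, h⟩ else 0),
      F_mem (by simp)⟩, ?_⟩
    funext ⟨s, hs⟩
    exact (congrFun (EF (fun s => if h : s ≠ (none, none, none) then q ⟨s, h⟩ else 0)) s).trans
      (dif_pos hs)

end NS3

/-- The no-signalling polytope on three parties with binary inputs and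
outputs has affine dimension 26. -/
theorem noSignalling3_affineDim :
    Module.finrank ℝ (vectorSpan ℝ noSignalling3) = 26 := by
  rw [NS3.span_eq, (LinearEquiv.ofBijective NS3.L NS3.L_bij).finrank_eq,
    Module.finrank_fintype_fun_eq_card]
  rfl
end

section
/- The causaltope of the total causal order A ≺ B ≺ C on three parties with binary inputs and binary outputs — the set of three-party empirical models p : ({0,1}³) → ({0,1}³ → ℝ) satisfying (i) ∑_{o_B,o_C} p i o depends only on i_A (for each o_A) and (ii) ∑_{o_C} p i o depends only on (i_A, i_B) (for each (o_A,o_B)) — has affine dimension 42. -/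
/-- The causaltope of the total causal order `A ≺ B ≺ C` on three parties with binary
inputs and binary outputs: empirical models `p` (nonnegative, normalised) such that
(i) the marginal of `o_A` depends only on `i_A`, and (ii) the joint marginal of
`(o_A, o_B)` depends only on `(i_A, i_B)`. -/
def causaltopeABC : Set ((Bool × Bool × Bool) → (Bool × Bool × Bool) → ℝ) :=
  {p | (∀ i o, 0 ≤ p i o) ∧ (∀ i, ∑ o : Bool × Bool × Bool, p i o = 1) ∧
    (∀ a b c b' c' oA : Bool,
      ∑ oB : Bool, ∑ oC : Bool, p (a, b, c) (oA, oB, oC)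
        = ∑ oB : Bool, ∑ oC : Bool, p (a, b', c') (oA, oB, oC)) ∧
    (∀ a b c c' oA oB : Bool,
      ∑ oC : Bool, p (a, b, c) (oA, oB, oC)
        = ∑ oC : Bool, p (a, b, c') (oA, oB, oC))}

/-- sign -/
noncomputable def sg (b : Bool) : ℝ := if b then -1 else 1

abbrev WW := (Bool × Bool × Bool × Bool × Bool → ℝ) × (Bool × Bool × Bool → ℝ) × (Bool → ℝ)

/-- parametrisation of the direction space -/
noncomputable def Phi : WW →ₗ[ℝ] ((Bool × Bool × Bool) → (Bool × Bool × Bool) → ℝ) where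
  toFun t := fun i o => sg o.2.2 * t.1 (i.1, i.2.1, i.2.2, o.1, o.2.1)
    + sg o.2.1 * t.2.1 (i.1, i.2.1, o.1) + sg o.1 * t.2.2 i.1
  map_add' s t := by
    funext i o
    simp only [Prod.fst_add, Prod.snd_add, Pi.add_apply]
    ring
  map_smul' r t := by
    funext i o
    simp only [Prod.smul_fst, Prod.smul_snd, Pi.smul_apply, smul_eq_mul, RingHom.id_apply]
    ring

theorem Phi_apply (t : WW) (a b c x y z : Bool) : Phi t (a, b, c) (x, y, z) =
    sg z * t.1 (a, b, c, x, y) + sg y * t.2.1 (a, b, x) + sg x * t.2.2 a := rfl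

/-- left inverse -/
noncomputable def Psi (d : (Bool × Bool × Bool) → (Bool × Bool × Bool) → ℝ) : WW :=
  (fun j => (∑ z : Bool, sg z * d (j.1, j.2.1, j.2.2.1) (j.2.2.2.1, j.2.2.2.2, z)) / 2,
   fun j => (∑ y : Bool, ∑ z : Bool, sg y * d (j.1, j.2.1, false) (j.2.2, y, z)) / 4,
   fun a => (∑ x : Bool, ∑ y : Bool, ∑ z : Bool, sg x * d (a, false, false) (x, y, z)) / 8)

theorem Psi_Phi (t : WW) : Psi (Phi t) = t := by
  obtain ⟨u, v, w⟩ := t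
  refine Prod.ext ?_ (Prod.ext ?_ ?_)
  · funext ⟨a, b, c, x, y⟩
    simp [Psi, Phi_apply, sg]
    ring
  · funext ⟨a, b, x⟩
    simp [Psi, Phi_apply, sg]
    ring
  · funext a
    simp [Psi, Phi_apply, sg]
    ring

theorem Phi_Psi (d : (Bool × Bool × Bool) → (Bool × Bool × Bool) → ℝ)
    (h0 : ∀ i, ∑ o : Bool × Bool × Bool, d i o = 0)
    (h1 : ∀ a b c b' c' oA : Bool, ∑ oB : Bool, ∑ oC : Bool, d (a, b, c) (oA, oB, oC)
        = ∑ oB : Bool, ∑ oC : Bool, d (a, b', c') (oA, oB, oC))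
    (h2 : ∀ a b c c' oA oB : Bool, ∑ oC : Bool, d (a, b, c) (oA, oB, oC)
        = ∑ oC : Bool, d (a, b, c') (oA, oB, oC)) : Phi (Psi d) = d := by
  funext ⟨a, b, c⟩ ⟨x, y, z⟩
  have e0 := h0 (a, false, false)
  have e1 := h1 a b false false false x
  have e2 := h2 a b c false x y
  rw [Phi_apply]
  simp only [Fintype.sum_prod_type, Fintype.sum_bool] at e0 e1 e2
  simp only [Psi, Fintype.sum_bool]
  cases x <;> cases y <;> cases z <;> simp [sg] <;> linarith

theorem range_eq : vectorSpan ℝ causaltopeABC = LinearMap.range Phi := by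
  apply le_antisymm
  · rw [vectorSpan, Submodule.span_le]
    rintro _ ⟨p, ⟨-, hp0, hp1, hp2⟩, q, ⟨-, hq0, hq1, hq2⟩, rfl⟩
    refine ⟨Psi (p - q), Phi_Psi _ ?_ ?_ ?_⟩
    · intro i
      simp only [Pi.sub_apply, Finset.sum_sub_distrib, hp0, hq0, sub_self]
    · intro a b c b' c' x
      simp only [Pi.sub_apply, Finset.sum_sub_distrib]
      rw [hp1 a b c b' c', hq1 a b c b' c']
    · intro a b c c' x y
      simp only [Pi.sub_apply, Finset.sum_sub_distrib]
      rw [hp2 a b c c', hq2 a b c c']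
  · rintro _ ⟨t, rfl⟩
    have key : ∀ t : WW, (∀ i o, -(1 / 8) ≤ Phi t i o) →
        (fun i o => 1 / 8 + Phi t i o) ∈ causaltopeABC := by
      intro t ht
      refine ⟨fun i o => by linarith [ht i o], ?_, ?_, ?_⟩
      · rintro ⟨a, b, c⟩
        simp only [Fintype.sum_prod_type, Fintype.sum_bool, Phi_apply]
        simp [sg]
        ring
      · intro a b c b' c' x
        simp only [Fintype.sum_bool, Phi_apply]
        simp [sg]
        ring
      · intro a b c c' x y
        simp only [Fintype.sum_bool, Phi_apply]
        simp [sg]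
        ring
    have hn : ∀ i o, |Phi t i o| ≤ ‖Phi t‖ := fun i o =>
      (norm_le_pi_norm (Phi t i) o).trans (norm_le_pi_norm (Phi t) i)
    have hN := norm_nonneg (Phi t)
    set N := ‖Phi t‖
    have he : (0 : ℝ) < 1 / (8 * (1 + N)) := by positivity
    set e := 1 / (8 * (1 + N)) with hedef
    have heN : e * (1 + N) = 1 / 8 := by rw [hedef]; field_simp
    have m1 := key (e • t) (by
      intro i o
      have h := (abs_le.1 (hn i o)).1
      rw [map_smul, Pi.smul_apply, Pi.smul_apply, smul_eq_mul]
      nlinarith)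
    have m0 := key 0 (by intro i o; simp)
    have hm := vsub_mem_vectorSpan ℝ m1 m0
    have hs : e • Phi t ∈ vectorSpan ℝ causaltopeABC := by
      convert hm using 1
      funext i o
      simp
    exact (Submodule.smul_mem_iff _ he.ne').1 hs

/-- The causaltope of the total causal order `A ≺ B ≺ C` on three parties
with binary inputs and binary outputs has affine dimension 42. -/
theorem causaltopeABC_affineDim :
    Module.finrank ℝ (vectorSpan ℝ causaltopeABC) = 42 := by
  rw [range_eq, LinearMap.finrank_range_of_inj (Function.LeftInverse.injective Psi_Phi)]
  simp [WW]
end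

section
/- The causaltope of the switch order in which party A's input controls the causal order of parties B and C — the set of three-party empirical models p : ({0,1}³) → ({0,1}³ → ℝ) satisfying (i) ∑_{o_B,o_C} p i o depends only on i_A (for each o_A), (ii) for inputs with i_A = 0, ∑_{o_C} p i o is independent of i_C (for each (o_A,o_B) and each i_B), and (iii) for inputs with i_A = 1, ∑_{o_B} p i o is independent of i_B (for each (o_A,o_C) and each i_C) — has affine dimension 42. -/
/-- The causaltope of the switch order where party `A`'s input controls the causal order
of parties `B` and `C` (binary inputs and outputs): empirical models `p` (nonnegative,
normalised) such that (i) the marginal of `o_A` depends only on `i_A`; (ii) when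
`i_A = 0` (so `B ≺ C`), the joint marginal of `(o_A, o_B)` is independent of `i_C`;
(iii) when `i_A = 1` (so `C ≺ B`), the joint marginal of `(o_A, o_C)` is independent
of `i_B`. -/
def causaltopeSwitch : Set ((Bool × Bool × Bool) → (Bool × Bool × Bool) → ℝ) :=
  {p | (∀ i o, 0 ≤ p i o) ∧ (∀ i, ∑ o : Bool × Bool × Bool, p i o = 1) ∧
    (∀ a b c b' c' oA : Bool,
      ∑ oB : Bool, ∑ oC : Bool, p (a, b, c) (oA, oB, oC)
        = ∑ oB : Bool, ∑ oC : Bool, p (a, b', c') (oA, oB, oC)) ∧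
    (∀ b c c' oA oB : Bool,
      ∑ oC : Bool, p (false, b, c) (oA, oB, oC)
        = ∑ oC : Bool, p (false, b, c') (oA, oB, oC)) ∧
    (∀ b b' c oA oC : Bool,
      ∑ oB : Bool, p (true, b, c) (oA, oB, oC)
        = ∑ oB : Bool, p (true, b', c) (oA, oB, oC))}

/-- Sign of an output bit. -/
noncomputable def swSign (b : Bool) : ℝ := if b then 1 else -1

/-- Parameter space. -/
abbrev SwPar : Type := (Bool ⊕ (Bool × Bool × Bool) ⊕ (Bool × Bool × Bool × Bool × Bool)) → ℝ

/-- Parametrisation of the direction space. -/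
noncomputable def swFun (x : SwPar) (i o : Bool × Bool × Bool) : ℝ :=
  swSign o.1 * x (.inl i.1) / 4 +
    (if i.1 then
      swSign o.2.2 * x (.inr (.inl (true, i.2.2, o.1))) / 2 +
        swSign o.2.1 * x (.inr (.inr (true, i.2.1, i.2.2, o.1, o.2.2)))
    else
      swSign o.2.1 * x (.inr (.inl (false, i.2.1, o.1))) / 2 +
        swSign o.2.2 * x (.inr (.inr (false, i.2.1, i.2.2, o.1, o.2.1))))

/-- The parametrisation as a linear map. -/
noncomputable def swLin : SwPar →ₗ[ℝ] ((Bool × Bool × Bool) → (Bool × Bool × Bool) → ℝ) where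
  toFun := swFun
  map_add' x y := by
    funext i o
    simp only [swFun, Pi.add_apply]
    split_ifs <;> ring
  map_smul' r x := by
    funext i o
    simp only [swFun, Pi.smul_apply, smul_eq_mul, RingHom.id_apply]
    split_ifs <;> ring

/-- The inverse of the parametrisation. -/
noncomputable def swInv (v : (Bool × Bool × Bool) → (Bool × Bool × Bool) → ℝ) : SwPar
  | .inl a => ∑ oB : Bool, ∑ oC : Bool, v (a, false, false) (true, oB, oC)
  | .inr (.inl (false, b, oA)) => ((∑ oC : Bool, v (false, b, false) (oA, true, oC))
      - ∑ oC : Bool, v (false, b, false) (oA, false, oC)) / 2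
  | .inr (.inl (true, c, oA)) => ((∑ oB : Bool, v (true, false, c) (oA, oB, true))
      - ∑ oB : Bool, v (true, false, c) (oA, oB, false)) / 2
  | .inr (.inr (false, b, c, oA, oB)) =>
      (v (false, b, c) (oA, oB, true) - v (false, b, c) (oA, oB, false)) / 2
  | .inr (.inr (true, b, c, oA, oC)) =>
      (v (true, b, c) (oA, true, oC) - v (true, b, c) (oA, false, oC)) / 2

theorem swInv_swFun (x : SwPar) : swInv (swFun x) = x := by
  funext k
  rcases k with a | ⟨a, b, c⟩ | ⟨a, b, c, d, e⟩
  · cases a <;> simp [swInv, swFun, swSign] <;> ring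
  · cases a <;> simp [swInv, swFun, swSign] <;> ring
  · cases a <;> simp [swInv, swFun, swSign] <;> ring

theorem swFun_swInv (v : (Bool × Bool × Bool) → (Bool × Bool × Bool) → ℝ)
    (h0 : ∀ i, ∑ o : Bool × Bool × Bool, v i o = 0)
    (h1 : ∀ a b c b' c' oA : Bool,
      ∑ oB : Bool, ∑ oC : Bool, v (a, b, c) (oA, oB, oC)
        = ∑ oB : Bool, ∑ oC : Bool, v (a, b', c') (oA, oB, oC))
    (h2 : ∀ b c c' oA oB : Bool,
      ∑ oC : Bool, v (false, b, c) (oA, oB, oC)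
        = ∑ oC : Bool, v (false, b, c') (oA, oB, oC))
    (h3 : ∀ b b' c oA oC : Bool,
      ∑ oB : Bool, v (true, b, c) (oA, oB, oC)
        = ∑ oB : Bool, v (true, b', c) (oA, oB, oC)) :
    swFun (swInv v) = v := by
  funext ⟨a, b, c⟩ ⟨oA, oB, oC⟩
  have e0 := h0 (a, false, false)
  have e1 := h1 a b c false false oA
  simp only [Fintype.sum_prod_type, Fintype.sum_bool] at e0 e1 h2 h3
  cases a
  · have e2 := h2 b c false oA true
    have e3 := h2 b c false oA false
    clear h0 h1 h2 h3
    cases oA <;> cases oB <;> cases oC <;> simp [swInv, swFun, swSign] <;> linarith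
  · have e2 := h3 b false c oA true
    have e3 := h3 b false c oA false
    clear h0 h1 h2 h3
    cases oA <;> cases oB <;> cases oC <;> simp [swInv, swFun, swSign] <;> linarith

theorem swPoint_mem (x : SwPar) (h : ∀ i o, |swFun x i o| ≤ 1 / 8) :
    (fun i o => 1 / 8 + swFun x i o) ∈ causaltopeSwitch := by
  refine ⟨fun i o => ?_, ?_, ?_, ?_, ?_⟩
  · have := (abs_le.mp (h i o)).1
    show 0 ≤ 1 / 8 + swFun x i o
    linarith
  · rintro ⟨a, b, c⟩
    cases a <;> simp [Fintype.sum_prod_type, swFun, swSign] <;> ring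
  · intro a b c b' c' oA
    cases a <;> simp [swFun, swSign] <;> ring
  · intro b c c' oA oB
    simp [swFun, swSign]
    ring
  · intro b c c' oA oB
    simp [swFun, swSign]
    ring

theorem vectorSpan_causaltopeSwitch :
    vectorSpan ℝ causaltopeSwitch = LinearMap.range swLin := by
  apply le_antisymm
  · refine Submodule.span_le.mpr ?_
    rintro _ ⟨p, hp, q, hq, rfl⟩
    obtain ⟨-, p1, p2, p3, p4⟩ := hp
    obtain ⟨-, q1, q2, q3, q4⟩ := hq
    refine ⟨swInv (p - q), swFun_swInv _ ?_ ?_ ?_ ?_⟩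
    · intro i
      simp only [Pi.sub_apply, Finset.sum_sub_distrib]
      rw [p1, q1, sub_self]
    · intro a b c b' c' oA
      simp only [Pi.sub_apply, Finset.sum_sub_distrib]
      rw [p2 a b c b' c', q2 a b c b' c']
    · intro b c c' oA oB
      simp only [Pi.sub_apply, Finset.sum_sub_distrib]
      rw [p3 b c c', q3 b c c']
    · intro b c c' oA oB
      simp only [Pi.sub_apply, Finset.sum_sub_distrib]
      rw [p4 b c c', q4 b c c']
  · rintro _ ⟨x, rfl⟩
    obtain ⟨M, hM0, hM⟩ : ∃ M : ℝ, 0 < M ∧ ∀ i o, |swFun x i o| ≤ M := by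
      refine ⟨1 + ∑ i, ∑ o, |swFun x i o|, by positivity, fun i o => ?_⟩
      have h1 := Finset.single_le_sum (f := fun o => |swFun x i o|)
        (fun o _ => abs_nonneg _) (Finset.mem_univ o)
      have h2 := Finset.single_le_sum (f := fun i => ∑ o, |swFun x i o|)
        (fun i _ => Finset.sum_nonneg fun o _ => abs_nonneg _) (Finset.mem_univ i)
      linarith
    have hs : ∀ (r : ℝ) i o, swFun (r • x) i o = r * swFun x i o := fun r i o =>
      congrFun (congrFun (swLin.map_smul r x) i) o
    have ha := swPoint_mem ((8 * M)⁻¹ • x) (fun i o => by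
      rw [hs, abs_mul, abs_of_pos (by positivity)]
      calc (8 * M)⁻¹ * |swFun x i o| ≤ (8 * M)⁻¹ * M := by gcongr; exact hM i o
        _ = 1 / 8 := by field_simp)
    have hb := swPoint_mem ((0 : ℝ) • x) (fun i o => by
      rw [hs]; norm_num)
    have hd := Submodule.smul_mem _ (8 * M) (vsub_mem_vectorSpan ℝ ha hb)
    convert hd using 1
    funext i o
    show swFun x i o = (8 * M) * ((1 / 8 + swFun ((8 * M)⁻¹ • x) i o)
      - (1 / 8 + swFun ((0 : ℝ) • x) i o))
    rw [hs, hs]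
    field_simp
    ring

/-- The causaltope of the switch order in which `A`'s input controls the
causal order of `B` and `C` has affine dimension 42. -/
theorem causaltopeSwitch_affineDim :
    Module.finrank ℝ (vectorSpan ℝ causaltopeSwitch) = 42 := by
  rw [vectorSpan_causaltopeSwitch, LinearMap.finrank_range_of_inj
    (f := swLin)
    (Function.LeftInverse.injective (g := swInv) (f := swLin) swInv_swFun)]
  simp
end

section
/- The set of three-party empirical models p : ({0,1}³) → ({0,1}³ → ℝ) satisfying simultaneously the causality equations of the order A ∨ (C⇝B) (for each down-closed event set T ∈ {{A},{C},{A,C},{B,C}}, the marginal of p obtained by summing over the outputs of the events outside T depends only on the inputs of the events in T) and the causality equations of the order B ∨ (C⇝A) (down-closed sets T ∈ {{B},{C},{B,C},{A,C}}) has affine dimension 30; since the no-signalling polytope has affine dimension 26, this intersection of causaltopes strictly contains the no-signalling polytope and is not equal to it. -/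
/-- The intersection of the causaltopes of the orders `A ∨ (C ⇝ B)` and `B ∨ (C ⇝ A)`:
empirical models satisfying simultaneously the causality equations of both orders
(marginal constraints for the lowersets `{A}`, `{C}`, `{A,C}`, `{B,C}` for the first and
`{B}`, `{C}`, `{B,C}`, `{A,C}` for the second). -/
def forkIntersection : Set ((Bool × Bool × Bool) → (Bool × Bool × Bool) → ℝ) :=
  {p | (∀ i o, 0 ≤ p i o) ∧ (∀ i, ∑ o : Bool × Bool × Bool, p i o = 1) ∧
    -- A ∨ (C ⇝ B): lowerset {A}
    (∀ iA iB iC iB' iC' oA : Bool,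
      ∑ oB : Bool, ∑ oC : Bool, p (iA, iB, iC) (oA, oB, oC)
        = ∑ oB : Bool, ∑ oC : Bool, p (iA, iB', iC') (oA, oB, oC)) ∧
    -- lowerset {C}
    (∀ iA iB iA' iB' iC oC : Bool,
      ∑ oA : Bool, ∑ oB : Bool, p (iA, iB, iC) (oA, oB, oC)
        = ∑ oA : Bool, ∑ oB : Bool, p (iA', iB', iC) (oA, oB, oC)) ∧
    -- lowerset {A,C}
    (∀ iA iB iB' iC oA oC : Bool,
      ∑ oB : Bool, p (iA, iB, iC) (oA, oB, oC)
        = ∑ oB : Bool, p (iA, iB', iC) (oA, oB, oC)) ∧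
    -- lowerset {B,C}
    (∀ iA iA' iB iC oB oC : Bool,
      ∑ oA : Bool, p (iA, iB, iC) (oA, oB, oC)
        = ∑ oA : Bool, p (iA', iB, iC) (oA, oB, oC)) ∧
    -- B ∨ (C ⇝ A): lowerset {B}
    (∀ iA iB iC iA' iC' oB : Bool,
      ∑ oA : Bool, ∑ oC : Bool, p (iA, iB, iC) (oA, oB, oC)
        = ∑ oA : Bool, ∑ oC : Bool, p (iA', iB, iC') (oA, oB, oC))}

/-- the sign of a bit -/
def fkSgn (b : Bool) : ℝ := if b then -1 else 1

/-- the free correlators: A, B, C, AC, BC, AB, ABC -/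
abbrev FkPar : Type :=
  (Bool → ℝ) × (Bool → ℝ) × (Bool → ℝ) × (Bool × Bool → ℝ) × (Bool × Bool → ℝ) ×
    (Bool × Bool × Bool → ℝ) × (Bool × Bool × Bool → ℝ)

/-- from correlators to model directions -/
noncomputable def fkPhi : FkPar →ₗ[ℝ] ((Bool × Bool × Bool) → (Bool × Bool × Bool) → ℝ) where
  toFun e := fun i o =>
    (fkSgn o.1 * e.1 i.1 + fkSgn o.2.1 * e.2.1 i.2.1 + fkSgn o.2.2 * e.2.2.1 i.2.2
      + fkSgn o.1 * fkSgn o.2.2 * e.2.2.2.1 (i.1, i.2.2)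
      + fkSgn o.2.1 * fkSgn o.2.2 * e.2.2.2.2.1 (i.2.1, i.2.2)
      + fkSgn o.1 * fkSgn o.2.1 * e.2.2.2.2.2.1 i
      + fkSgn o.1 * fkSgn o.2.1 * fkSgn o.2.2 * e.2.2.2.2.2.2 i) / 8
  map_add' e f := by
    funext i o
    simp only [Prod.fst_add, Prod.snd_add, Pi.add_apply]
    ring
  map_smul' r e := by
    funext i o
    simp only [Prod.smul_fst, Prod.smul_snd, Pi.smul_apply, smul_eq_mul, RingHom.id_apply]
    ring

/-- correlators of a model direction -/
noncomputable def fkPsi (d : (Bool × Bool × Bool) → (Bool × Bool × Bool) → ℝ) : FkPar :=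
  (fun a => ∑ x, ∑ y, ∑ z, fkSgn x * d (a, false, false) (x, y, z),
   fun b => ∑ x, ∑ y, ∑ z, fkSgn y * d (false, b, false) (x, y, z),
   fun c => ∑ x, ∑ y, ∑ z, fkSgn z * d (false, false, c) (x, y, z),
   fun t => ∑ x, ∑ y, ∑ z, fkSgn x * fkSgn z * d (t.1, false, t.2) (x, y, z),
   fun t => ∑ x, ∑ y, ∑ z, fkSgn y * fkSgn z * d (false, t.1, t.2) (x, y, z),
   fun i => ∑ x, ∑ y, ∑ z, fkSgn x * fkSgn y * d i (x, y, z),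
   fun i => ∑ x, ∑ y, ∑ z, fkSgn x * fkSgn y * fkSgn z * d i (x, y, z))

lemma fkPsi_fkPhi (e : FkPar) : fkPsi (fkPhi e) = e := by
  obtain ⟨a, b, c, ac, bc, ab, abc⟩ := e
  simp only [fkPsi, fkPhi, LinearMap.coe_mk, AddHom.coe_mk, Prod.mk.injEq, Fintype.sum_bool, fkSgn,
    if_true, Bool.false_eq_true, if_false]
  refine ⟨?_, ?_, ?_, ?_, ?_, ?_, ?_⟩ <;> funext t <;> ring

set_option maxHeartbeats 2000000 in
lemma fkPhi_fkPsi (p q : (Bool × Bool × Bool) → (Bool × Bool × Bool) → ℝ)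
    (hp : p ∈ forkIntersection) (hq : q ∈ forkIntersection) :
    fkPhi (fkPsi (p - q)) = p - q := by
  obtain ⟨-, pn, pA, pC, pAC, pBC, pB⟩ := hp
  obtain ⟨-, qn, qA, qC, qAC, qBC, qB⟩ := hq
  simp only [Fintype.sum_prod_type, Fintype.sum_bool] at pn pA pC pAC pBC pB qn qA qC qAC qBC qB
  funext ⟨iA, iB, iC⟩ ⟨x, y, z⟩
  have a1 := pA iA iB iC false false
  have a2 := qA iA iB iC false false
  have b1 := pB iA iB iC false false
  have b2 := qB iA iB iC false false
  have c1 := pC iA iB false false iC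
  have c2 := qC iA iB false false iC
  have d1 := pAC iA iB false iC
  have d2 := qAC iA iB false iC
  have e1 := pBC iA false iB iC
  have e2 := qBC iA false iB iC
  have n1 := pn (iA, iB, iC)
  have n2 := qn (iA, iB, iC)
  clear pn pA pC pAC pBC pB qn qA qC qAC qBC qB
  simp only [Bool.forall_bool] at a1 a2 b1 b2 c1 c2 d1 d2 e1 e2
  simp only [fkPsi, fkPhi, LinearMap.coe_mk, AddHom.coe_mk, Fintype.sum_bool, Pi.sub_apply]
  cases x <;> cases y <;> cases z <;>
    simp only [fkSgn, if_true, Bool.false_eq_true, if_false] <;> linarith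

lemma fk_mem (e : FkPar) (h : ∀ i o, -(1 / 8) ≤ fkPhi e i o) :
    (fun i o => 1 / 8 + fkPhi e i o) ∈ forkIntersection := by
  refine ⟨fun i o => by linarith [h i o], ?_, ?_, ?_, ?_, ?_, ?_⟩ <;> intros <;>
    simp only [fkPhi, LinearMap.coe_mk, AddHom.coe_mk, Fintype.sum_prod_type, Fintype.sum_bool,
      fkSgn, if_true, Bool.false_eq_true, if_false] <;> ring

lemma fk_span : vectorSpan ℝ forkIntersection = LinearMap.range fkPhi := by
  apply le_antisymm
  · rw [vectorSpan_def, Submodule.span_le]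
    rintro _ ⟨p, hp, q, hq, rfl⟩
    exact ⟨_, fkPhi_fkPsi p q hp hq⟩
  · rintro _ ⟨e, rfl⟩
    set M : ℝ := 8 * (‖fkPhi e‖ + 1) with hM
    have hpos : 0 < M := by positivity
    have h1 : (fun i o => 1 / 8 + fkPhi (M⁻¹ • e) i o) ∈ forkIntersection := by
      apply fk_mem
      intro i o
      have hb : |fkPhi e i o| ≤ ‖fkPhi e‖ :=
        (norm_le_pi_norm (fkPhi e i) o).trans (norm_le_pi_norm (fkPhi e) i)
      have hb2 := (abs_le.mp hb).1
      rw [map_smul, Pi.smul_apply, Pi.smul_apply, smul_eq_mul, inv_mul_eq_div, le_div_iff₀ hpos]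
      rw [hM]
      linarith
    have h0 : (fun i o => 1 / 8 + fkPhi 0 i o) ∈ forkIntersection := by
      apply fk_mem
      intro i o
      simp
    have h2 := vsub_mem_vectorSpan ℝ h1 h0
    have h3 := Submodule.smul_mem _ M h2
    convert h3 using 1
    funext i o
    simp only [map_smul, map_zero, Pi.smul_apply, Pi.sub_apply, vsub_eq_sub, smul_eq_mul,
      Pi.zero_apply]
    field_simp
    ring

lemma fk_finrank : Module.finrank ℝ (vectorSpan ℝ forkIntersection) = 30 := by
  rw [fk_span, LinearMap.finrank_range_of_inj (Function.LeftInverse.injective fkPsi_fkPhi)]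
  simp [FkPar]

lemma fk_subset : noSignalling3 ⊆ forkIntersection := by
  rintro p ⟨h0, h1, hA, hB, hC⟩
  refine ⟨h0, h1, ?_, ?_, fun a b b' c x z => hB a b b' c x z,
    fun a a' b c y z => hA a a' b c y z, ?_⟩
  · intro a b c b' c' x
    simp only [Fintype.sum_bool] at *
    linarith [hB a b b' c x true, hB a b b' c x false, hC a b' c c' x true, hC a b' c c' x false]
  · intro a b a' b' c z
    simp only [Fintype.sum_bool] at *
    linarith [hB a b b' c true z, hB a b b' c false z, hA a a' b' c true z, hA a a' b' c false z]
  · intro a b c a' c' y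
    simp only [Fintype.sum_bool] at *
    linarith [hA a a' b c y true, hA a a' b c y false, hC a' b c c' true y, hC a' b c c' false y]

lemma fk_ne : noSignalling3 ≠ forkIntersection := by
  intro h
  have hm := fk_mem (0, 0, 0, 0, 0, fun i => fkSgn i.2.2, 0) (by
    rintro ⟨a, b, c⟩ ⟨x, y, z⟩
    simp only [fkPhi, LinearMap.coe_mk, AddHom.coe_mk, Pi.zero_apply]
    cases c <;> cases x <;> cases y <;> simp [fkSgn] <;> norm_num)
  rw [← h] at hm
  have := hm.2.2.2.2 false false false true false false
  simp [fkPhi, fkSgn] at this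
  norm_num at this

/-- The intersection of the causaltopes of `A ∨ (C ⇝ B)` and `B ∨ (C ⇝ A)`
has affine dimension 30; since the no-signalling polytope has affine dimension 26, the
intersection strictly contains the no-signalling polytope and is not equal to it. -/
theorem forkIntersection_affineDim :
    Module.finrank ℝ (vectorSpan ℝ forkIntersection) = 30 ∧
    noSignalling3 ⊆ forkIntersection ∧ noSignalling3 ≠ forkIntersection := by
  exact ⟨fk_finrank, fk_subset, fk_ne⟩
end

section
/- Guess-Your-Neighbour's-Input causal inequality: let p : ({0,1}³) → ({0,1}² → ℝ) be a bipartite conditional probability distribution with Alice's input a, Bob's inputs (b,b') and outputs (x,y), and suppose p = μ • q + (1 − μ) • r for some μ ∈ [0,1] and conditional probability distributions q, r such that q satisfies no signalling from Bob to Alice (∑_y q (a,b,b') (x,y) depends only on a, for each x) and r satisfies no signalling from Alice to Bob (∑_x r (a,b,b') (x,y) depends only on (b,b'), for each y). Then the success probability of the GYNI game, P := (1/8) · ∑_{a,b,b' ∈ {0,1}} ∑_{x,y ∈ {0,1}} p (a,b,b') (x,y) · χ(a,b,b',x,y), satisfies P ≤ 3/4, where χ(a,b,b',x,y) = 1 if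 (b' = 0 and y = a) or (b' = 1 and x = b), and χ = 0 otherwise. -/
/-- GYNI causal inequality: if the bipartite conditional probability
distribution `p` — Alice's input `a`, Bob's inputs `(b, b')`, outputs `(x, y)` — is a
convex mixture `p = μ • q + (1 - μ) • r` of a distribution `q` with no signalling from
Bob to Alice and a distribution `r` with no signalling from Alice to Bob, then the
success probability of the Guess-Your-Neighbour's-Input game is at most `3/4`. -/
theorem gyni_causal_inequality
    (p q r : Bool × Bool × Bool → Bool × Bool → ℝ) (μ : ℝ)
    (hμ0 : 0 ≤ μ) (hμ1 : μ ≤ 1)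
    (hq0 : ∀ i o, 0 ≤ q i o) (hq1 : ∀ i, ∑ o : Bool × Bool, q i o = 1)
    (hr0 : ∀ i o, 0 ≤ r i o) (hr1 : ∀ i, ∑ o : Bool × Bool, r i o = 1)
    (hp : ∀ i o, p i o = μ * q i o + (1 - μ) * r i o)
    -- `q` satisfies no signalling from Bob to Alice:
    (hqns : ∀ a b b' c c' x : Bool,
      ∑ y : Bool, q (a, b, b') (x, y) = ∑ y : Bool, q (a, c, c') (x, y))
    -- `r` satisfies no signalling from Alice to Bob:
    (hrns : ∀ a a' b b' y : Bool,
      ∑ x : Bool, r (a, b, b') (x, y) = ∑ x : Bool, r (a', b, b') (x, y)) :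
    (1/8 : ℝ) * ∑ a : Bool, ∑ b : Bool, ∑ b' : Bool, ∑ x : Bool, ∑ y : Bool,
        p (a, b, b') (x, y) *
          (if (b' = false ∧ y = a) ∨ (b' = true ∧ x = b) then 1 else 0)
      ≤ 3/4 := by
  simp only [Fintype.sum_prod_type, Fintype.sum_bool] at hq1 hr1 hqns hrns
  have hQ : ∑ a : Bool, ∑ b : Bool, ∑ b' : Bool, ∑ x : Bool, ∑ y : Bool,
        q (a, b, b') (x, y) *
          (if (b' = false ∧ y = a) ∨ (b' = true ∧ x = b) then 1 else 0) ≤ 6 := by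
    have h1 := hqns true true true false true true
    have h2 := hqns false true true false true true
    have h3 := fun a b => hq1 (a, b, false)
    have h4 := fun a => hq1 (a, false, true)
    have h5 := fun a b x y => hq0 (a, b, false) (x, y)
    simp only [Bool.forall_bool] at h3 h4 h5
    simp
    linarith
  have hR : ∑ a : Bool, ∑ b : Bool, ∑ b' : Bool, ∑ x : Bool, ∑ y : Bool,
        r (a, b, b') (x, y) *
          (if (b' = false ∧ y = a) ∨ (b' = true ∧ x = b) then 1 else 0) ≤ 6 := by
    have h1 := hrns true false true false true
    have h2 := hrns true false false false true
    have h3 := fun a b => hr1 (a, b, true)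
    have h4 := fun b => hr1 (false, b, false)
    have h5 := fun a b x y => hr0 (a, b, true) (x, y)
    simp only [Bool.forall_bool] at h3 h4 h5
    simp
    linarith
  have hP : ∑ a : Bool, ∑ b : Bool, ∑ b' : Bool, ∑ x : Bool, ∑ y : Bool,
        p (a, b, b') (x, y) *
          (if (b' = false ∧ y = a) ∨ (b' = true ∧ x = b) then (1 : ℝ) else 0)
      = μ * (∑ a : Bool, ∑ b : Bool, ∑ b' : Bool, ∑ x : Bool, ∑ y : Bool,
        q (a, b, b') (x, y) *
          (if (b' = false ∧ y = a) ∨ (b' = true ∧ x = b) then 1 else 0))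
      + (1 - μ) * (∑ a : Bool, ∑ b : Bool, ∑ b' : Bool, ∑ x : Bool, ∑ y : Bool,
        r (a, b, b') (x, y) *
          (if (b' = false ∧ y = a) ∨ (b' = true ∧ x = b) then 1 else 0)) := by
    simp only [hp, Finset.mul_sum, ← Finset.sum_add_distrib, add_mul, mul_assoc]
  rw [hP]
  have e1 := mul_le_mul_of_nonneg_left hQ hμ0
  have e2 := mul_le_mul_of_nonneg_left hR (sub_nonneg.2 hμ1)
  linarith
end
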